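/- arXiv:1812.04086 — 3 statements merged into one kernel-verified Lean document; each statement's English description precedes it below -/
import Mathlib

section
/- Let T > 0 be finite and Γ : [0,T] ⇒ ℝ^d a closed convex-valued mapping such that int Γ_t ≠ ∅ for all t ∈ [0,T] and int ⃗Γ_t ≠ ∅ for all t ∈ (0,T]. Then Γ_t = cl{y_t | y ∈ D(Γ)} for all t ∈ [0,T] if and only if Γ is right-inner semicontinuous. In that case, ⃗Γ is left-inner semicontinuous and ⃗Γ_t = cl{y_{t-} | y ∈ D(Γ)} for every t ∈ (0,T]. -/
open MeasureTheory Filter Set Topology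
open scoped ENNReal Classical

/-- Euclidean space `ℝ^d`. -/
abbrev Euc (d : ℕ) := EuclideanSpace ℝ (Fin d)

/-- A sequence in `[0,T]` increasing strictly to `t` from the left. -/
def SeqToLeft (t : ℝ) (s : ℕ → ℝ) : Prop :=
  StrictMono s ∧ (∀ n, 0 ≤ s n ∧ s n < t) ∧ Tendsto s atTop (𝓝 t)

/-- A sequence in `[0,T]` decreasing strictly to `t` from the right. -/
def SeqToRight (T t : ℝ) (s : ℕ → ℝ) : Prop :=
  StrictAnti s ∧ (∀ n, t < s n ∧ s n ≤ T) ∧ Tendsto s atTop (𝓝 t)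

/-- `liminf_{s↑↑t} Γ_s`: the points `x` with `dist(x,Γ_{s_n}) → 0` along every strictly
increasing sequence `s_n → t`. -/
def leftLiminfSV {d : ℕ} (Γ : ℝ → Set (Euc d)) (t : ℝ) : Set (Euc d) :=
  {x | ∀ s : ℕ → ℝ, SeqToLeft t s →
    Tendsto (fun n => Metric.infDist x (Γ (s n))) atTop (𝓝 0)}

/-- `limsup_{s↑↑t} Γ_s`: the points `x` which are limits of points `x_n ∈ Γ_{s_n}` along
some strictly increasing sequence `s_n → t`. -/
def leftLimsupSV {d : ℕ} (Γ : ℝ → Set (Euc d)) (t : ℝ) : Set (Euc d) :=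
  {x | ∃ s : ℕ → ℝ, SeqToLeft t s ∧
    ∃ xn : ℕ → Euc d, (∀ n, xn n ∈ Γ (s n)) ∧ Tendsto xn atTop (𝓝 x)}

/-- `liminf_{s↓↓t} Γ_s`. -/
def rightLiminfSV {d : ℕ} (T : ℝ) (Γ : ℝ → Set (Euc d)) (t : ℝ) : Set (Euc d) :=
  {x | ∀ s : ℕ → ℝ, SeqToRight T t s →
    Tendsto (fun n => Metric.infDist x (Γ (s n))) atTop (𝓝 0)}

/-- `limsup_{s↓↓t} Γ_s`. -/
def rightLimsupSV {d : ℕ} (T : ℝ) (Γ : ℝ → Set (Euc d)) (t : ℝ) : Set (Euc d) :=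
  {x | ∃ s : ℕ → ℝ, SeqToRight T t s ∧
    ∃ xn : ℕ → Euc d, (∀ n, xn n ∈ Γ (s n)) ∧ Tendsto xn atTop (𝓝 x)}

/-- The mapping `⃗Γ` of left limits: `⃗Γ_0 = {0}` and `⃗Γ_t = liminf_{s↑↑t} Γ_s`. -/
def vecSV {d : ℕ} (Γ : ℝ → Set (Euc d)) (t : ℝ) : Set (Euc d) :=
  if t ≤ 0 then {0} else leftLiminfSV Γ t

/-- `Γ` is right-inner semicontinuous on `[0,T]`: the preimage of every open set is open
in the topology `τ_r` generated by the right-open intervals (stated via the basic open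
balls). -/
def RightIscSV (T : ℝ) {d : ℕ} (Γ : ℝ → Set (Euc d)) : Prop :=
  ∀ t ∈ Set.Icc (0:ℝ) T, ∀ x ∈ Γ t, ∀ ε > (0:ℝ), ∃ δ > (0:ℝ),
    ∀ s ∈ Set.Icc (0:ℝ) T, t ≤ s → s < t + δ → ∃ x' ∈ Γ s, dist x' x < ε

/-- `Γ` is left-inner semicontinuous on `[0,T]`. -/
def LeftIscSV (T : ℝ) {d : ℕ} (Γ : ℝ → Set (Euc d)) : Prop :=
  ∀ t ∈ Set.Icc (0:ℝ) T, ∀ x ∈ Γ t, ∀ ε > (0:ℝ), ∃ δ > (0:ℝ),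
    ∀ s ∈ Set.Icc (0:ℝ) T, s ≤ t → t - δ < s → ∃ x' ∈ Γ s, dist x' x < ε

/-- `Γ` is right-outer semicontinuous on `[0,T]`: its graph is closed in the product of
`τ_r` and the Euclidean topology (stated sequentially). -/
def RightOscSV (T : ℝ) {d : ℕ} (Γ : ℝ → Set (Euc d)) : Prop :=
  ∀ t ∈ Set.Icc (0:ℝ) T, ∀ (s : ℕ → ℝ) (xn : ℕ → Euc d) (x : Euc d),
    (∀ n, s n ∈ Set.Icc (0:ℝ) T ∧ t ≤ s n) → Tendsto s atTop (𝓝 t) →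
    (∀ n, xn n ∈ Γ (s n)) → Tendsto xn atTop (𝓝 x) → x ∈ Γ t

/-- `Γ` is left-outer semicontinuous on `[0,T]`. -/
def LeftOscSV (T : ℝ) {d : ℕ} (Γ : ℝ → Set (Euc d)) : Prop :=
  ∀ t ∈ Set.Icc (0:ℝ) T, ∀ (s : ℕ → ℝ) (xn : ℕ → Euc d) (x : Euc d),
    (∀ n, s n ∈ Set.Icc (0:ℝ) T ∧ s n ≤ t) → Tendsto s atTop (𝓝 t) →
    (∀ n, xn n ∈ Γ (s n)) → Tendsto xn atTop (𝓝 x) → x ∈ Γ t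

/-- `Γ` has limits from the left on `(0,T]`. -/
def LagSV (T : ℝ) {d : ℕ} (Γ : ℝ → Set (Euc d)) : Prop :=
  ∀ t ∈ Set.Ioc (0:ℝ) T, leftLiminfSV Γ t = leftLimsupSV Γ t

/-- `Γ` has limits from the right on `[0,T)`. -/
def LadSV (T : ℝ) {d : ℕ} (Γ : ℝ → Set (Euc d)) : Prop :=
  ∀ t ∈ Set.Ico (0:ℝ) T, rightLiminfSV T Γ t = rightLimsupSV T Γ t

/-- A càdlàg set-valued mapping: right-continuous (right-isc and right-osc) with limits
from the left. -/
def CadlagSV (T : ℝ) {d : ℕ} (Γ : ℝ → Set (Euc d)) : Prop :=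
  RightIscSV T Γ ∧ RightOscSV T Γ ∧ LagSV T Γ

/-- A càglàd set-valued mapping: left-continuous (left-isc and left-osc) with limits
from the right. -/
def CagladSV (T : ℝ) {d : ℕ} (Γ : ℝ → Set (Euc d)) : Prop :=
  LeftIscSV T Γ ∧ LeftOscSV T Γ ∧ LadSV T Γ

/-- A function `[0,T] → ℝ^d` (modelled on `ℝ`) is càdlàg: right-continuous on `[0,T)`
with left limits on `(0,T]`. -/
def IsCadlagOn (T : ℝ) {d : ℕ} (y : ℝ → Euc d) : Prop :=
  (∀ t ∈ Set.Ico (0:ℝ) T, Tendsto y (𝓝[>] t) (𝓝 (y t))) ∧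
  (∀ t ∈ Set.Ioc (0:ℝ) T, ∃ l, Tendsto y (𝓝[<] t) (𝓝 l))

/-- The left-limit evaluation `y_{t-}`, with the convention `y_{0-} := 0`. -/
noncomputable def lmod {d : ℕ} (y : ℝ → Euc d) (t : ℝ) : Euc d :=
  if t ≤ 0 then 0 else Function.leftLim y t

/-!
An interior point of `liminf Γ_s` belongs to `Γ_s` itself for `s` near the limit: a small closed
ball around it is uniformly close to `Γ_s` by compactness, and a closed convex set that is within
distance `r` of every point of a ball of radius `r` contains the centre, by Hahn–Banach separation.
So each interior point of `Γ_t`, resp. `⃗Γ_t`, is a constant selection just after, resp. just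
before, `t`. Compactness of `[0,T]` lets finitely many of these constants be glued into a càdlàg
selection, which may then be modified near `t` to take any prescribed interior value. Interior
points are dense because the values are convex and solid.
-/

section InnerLimit

open Metric

/-- The inner (lower Painlevé–Kuratowski) limit `liminf Γ_s` of a set-valued mapping along a filter:
every neighbourhood of each of its points eventually meets `Γ s`. Both one-sided inner
semicontinuity and `⃗Γ` are expressed through it, for one-sided neighbourhood filters. -/
def innerLimit {ι X : Type*} [PseudoMetricSpace X] (l : Filter ι) (Γ : ι → Set X) : Set X :=
  {x | ∀ ε > 0, ∀ᶠ s in l, x ∈ thickening ε (Γ s)}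

variable {ι : Type*} {l : Filter ι}

section Metric

variable {X : Type*} [PseudoMetricSpace X] {Γ : ι → Set X}

lemma mem_innerLimit_of_tendsto {z : ι → X} {x : X} (hz : Tendsto z l (𝓝 x))
    (hmem : ∀ᶠ s in l, z s ∈ Γ s) : x ∈ innerLimit l Γ := by
  intro ε hε
  filter_upwards [hmem, tendsto_nhds.1 hz ε hε] with s hs hdist
  exact mem_thickening_iff.2 ⟨z s, hs, by rwa [dist_comm]⟩

lemma mem_innerLimit_of_eventually_mem {x : X} (h : ∀ᶠ s in l, x ∈ Γ s) : x ∈ innerLimit l Γ :=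
  mem_innerLimit_of_tendsto tendsto_const_nhds h

lemma isClosed_innerLimit : IsClosed (innerLimit l Γ) := by
  refine isClosed_of_closure_subset fun x hx ε hε => ?_
  obtain ⟨y, hy, hxy⟩ := mem_closure_iff.1 hx (ε / 2) (half_pos hε)
  filter_upwards [hy (ε / 2) (half_pos hε)] with s hs
  rw [← add_halves ε]
  exact thickening_thickening_subset _ _ _ (mem_thickening_iff.2 ⟨y, hs, hxy⟩)

lemma eventually_subset_thickening_of_isCompact {K : Set X} (hK : IsCompact K)
    (hsub : K ⊆ innerLimit l Γ) {ε : ℝ} (hε : 0 < ε) : ∀ᶠ s in l, K ⊆ thickening ε (Γ s) := by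
  obtain ⟨F, hFK, hF, hcover⟩ := hK.finite_cover_balls (half_pos hε)
  have hcenters : ∀ᶠ s in l, ∀ p ∈ F, p ∈ thickening (ε / 2) (Γ s) :=
    hF.eventually_all.2 fun p hp => hsub (hFK hp) (ε / 2) (half_pos hε)
  filter_upwards [hcenters] with s hs x hx
  obtain ⟨p, hp, hxp⟩ := mem_iUnion₂.1 (hcover hx)
  rw [← add_halves ε]
  exact thickening_thickening_subset _ _ _ (mem_thickening_iff.2 ⟨p, hs p hp, hxp⟩)

end Metric

section Convex

variable {E : Type*} [NormedAddCommGroup E] [NormedSpace ℝ E]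

lemma convex_innerLimit {Γ : ι → Set E} (hconv : ∀ᶠ s in l, Convex ℝ (Γ s)) :
    Convex ℝ (innerLimit l Γ) := by
  intro x hx y hy a b ha hb hab ε hε
  filter_upwards [hconv, hx ε hε, hy ε hε] with s hs hxs hys
  exact hs.thickening ε hxs hys ha hb hab

lemma eq_closure_of_interior_subset {K A : Set E} (hclosed : IsClosed K) (hconv : Convex ℝ K)
    (hsolid : (interior K).Nonempty) (hint : interior K ⊆ A) (hsub : A ⊆ K) : K = closure A := by
  refine Subset.antisymm ?_ (closure_minimal hsub hclosed)
  calc K = closure (interior K) := by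
        rw [hconv.closure_interior_eq_closure_of_nonempty_interior hsolid, hclosed.closure_eq]
    _ ⊆ closure A := closure_mono hint

/-- A functional `f` separating `x` strictly from `K` would satisfy
`f x + r‖f‖ = sup f (closedBall x r) ≤ sup f K + r‖f‖ < f x + r‖f‖`. -/
lemma mem_of_closedBall_subset_thickening {K : Set E} (hclosed : IsClosed K) (hconv : Convex ℝ K)
    {x : E} {r : ℝ} (hr : 0 < r) (hsub : closedBall x r ⊆ thickening r K) : x ∈ K := by
  by_contra hx
  obtain ⟨f, u, hfK, hfx⟩ := geometric_hahn_banach_closed_point hconv hclosed hx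
  have hbound : ∀ v, ‖v‖ ≤ r → f v ≤ u - f x + ‖f‖ * r := by
    intro v hv
    obtain ⟨k, hk, hdist⟩ := mem_thickening_iff.1 (hsub (show x + v ∈ closedBall x r by simpa))
    rw [dist_eq_norm] at hdist
    have hdiff : f (x + v - k) ≤ ‖f‖ * r :=
      (le_abs_self _).trans (f.le_opNorm_of_le hdist.le)
    rw [map_sub, map_add] at hdiff
    linarith [hfK k hk]
  have hnorm : ‖f‖ ≤ (u - f x + ‖f‖ * r) / r := by
    refine ContinuousLinearMap.opNorm_le_of_unit_norm
      (div_nonneg (by simpa using hbound 0 (by simpa using hr.le)) hr.le) fun v hv => ?_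
    have hpos := hbound (r • v) (by rw [norm_smul, hv, mul_one, Real.norm_of_nonneg hr.le])
    have hneg := hbound (r • -v) (by
      rw [norm_smul, norm_neg, hv, mul_one, Real.norm_of_nonneg hr.le])
    rw [map_smul, smul_eq_mul] at hpos hneg
    rw [map_neg] at hneg
    rw [le_div_iff₀ hr, Real.norm_eq_abs, ← abs_of_pos hr, ← abs_mul, abs_of_pos hr]
    exact abs_le.2 ⟨by linarith, by linarith⟩
  rw [le_div_iff₀ hr] at hnorm
  linarith

lemma eventually_mem_of_mem_interior_innerLimit [ProperSpace E] {Γ : ι → Set E}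
    (hval : ∀ᶠ s in l, IsClosed (Γ s) ∧ Convex ℝ (Γ s)) {x : E}
    (hx : x ∈ interior (innerLimit l Γ)) : ∀ᶠ s in l, x ∈ Γ s := by
  obtain ⟨r, hr, hsub⟩ := nhds_basis_closedBall.mem_iff.1 (mem_interior_iff_mem_nhds.1 hx)
  filter_upwards [hval,
    eventually_subset_thickening_of_isCompact (isCompact_closedBall x r) hsub hr]
    with s ⟨hclosed, hconv⟩ hs
  exact mem_of_closedBall_subset_thickening hclosed hconv hr hs

end Convex

end InnerLimit

section Cadlag

lemma piecewise_Iio_of_lt {ι X : Type*} [LinearOrder ι] {c s : ι} (z w : ι → X) (h : s < c) :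
    (Iio c).piecewise z w s = z s :=
  piecewise_eq_of_mem _ _ _ h

lemma piecewise_Iio_of_ge {ι X : Type*} [LinearOrder ι] {c s : ι} (z w : ι → X) (h : c ≤ s) :
    (Iio c).piecewise z w s = w s :=
  piecewise_eq_of_notMem _ _ _ (notMem_Iio.2 h)

variable {ι X : Type*} [LinearOrder ι] [TopologicalSpace ι] [TopologicalSpace X]

/-- A càdlàg function on a whole linear order: right-continuous with left limits everywhere.
Unlike `IsCadlagOn` it does not refer to an interval, so it is stable under gluing. -/
def IsCadlag (z : ι → X) : Prop :=
  ∀ t, ContinuousWithinAt z (Ioi t) t ∧ ∃ x, Tendsto z (𝓝[<] t) (𝓝 x)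

/-- A càdlàg function, defined everywhere, which is a selection of `Γ` on the set `S`. -/
def IsCadlagSelection (S : Set ι) (Γ : ι → Set X) (z : ι → X) : Prop :=
  IsCadlag z ∧ ∀ s ∈ S, z s ∈ Γ s

lemma isCadlag_const (x : X) : IsCadlag fun _ : ι => x :=
  fun _ => ⟨continuousWithinAt_const, x, tendsto_const_nhds⟩

variable {z w : ι → X} {S : Set ι} {Γ : ι → Set X}

lemma IsCadlag.piecewise_Iio [OrderTopology ι] (hz : IsCadlag z) (hw : IsCadlag w) (c : ι) :
    IsCadlag ((Iio c).piecewise z w) := by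
  have hbelow : EqOn ((Iio c).piecewise z w) z (Iio c) := fun s => piecewise_Iio_of_lt z w
  have habove : EqOn ((Iio c).piecewise z w) w (Ici c) := fun s => piecewise_Iio_of_ge z w
  refine fun t => ⟨?_, ?_⟩
  · rcases lt_or_ge t c with htc | hct
    · refine (hz t).1.congr_of_eventuallyEq ?_ (hbelow htc)
      exact hbelow.eventuallyEq_of_mem (mem_nhdsWithin_of_mem_nhds (Iio_mem_nhds htc))
    · exact (hw t).1.congr (fun s hs => habove (hct.trans (le_of_lt hs))) (habove hct)
  · rcases le_or_gt t c with htc | hct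
    · obtain ⟨x, hx⟩ := (hz t).2
      refine ⟨x, hx.congr' (EventuallyEq.symm ?_)⟩
      exact (hbelow.mono (Iio_subset_Iio htc)).eventuallyEq_of_mem self_mem_nhdsWithin
    · obtain ⟨x, hx⟩ := (hw t).2
      refine ⟨x, hx.congr' (EventuallyEq.symm ?_)⟩
      exact habove.eventuallyEq_of_mem (mem_nhdsWithin_of_mem_nhds (Ici_mem_nhds hct))

namespace IsCadlagSelection

lemma mono {S' : Set ι} (hz : IsCadlagSelection S Γ z) (h : S' ⊆ S) : IsCadlagSelection S' Γ z :=
  ⟨hz.1, fun s hs => hz.2 s (h hs)⟩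

lemma piecewise_Iio [OrderTopology ι] {c : ι} (hz : IsCadlagSelection (S ∩ Iio c) Γ z)
    (hw : IsCadlagSelection (S ∩ Ici c) Γ w) : IsCadlagSelection S Γ ((Iio c).piecewise z w) := by
  refine ⟨hz.1.piecewise_Iio hw.1 c, fun s hs => ?_⟩
  rcases lt_or_ge s c with hsc | hcs
  · rw [piecewise_Iio_of_lt z w hsc]
    exact hz.2 s ⟨hs, hsc⟩
  · rw [piecewise_Iio_of_ge z w hcs]
    exact hw.2 s ⟨hs, hcs⟩

lemma exists_eqOn_Ico [OrderTopology ι] (hz : IsCadlagSelection S Γ z) {a b : ι} {x : X}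
    (hx : ∀ s ∈ S ∩ Ico a b, x ∈ Γ s) :
    ∃ w, IsCadlagSelection S Γ w ∧ EqOn w (fun _ => x) (Ico a b) := by
  have hconst : IsCadlagSelection (S ∩ Ici a ∩ Iio b) Γ fun _ => x :=
    ⟨isCadlag_const x, fun s hs => hx s ⟨hs.1.1, hs.1.2, hs.2⟩⟩
  refine ⟨(Iio a).piecewise z ((Iio b).piecewise (fun _ => x) z),
    (hz.mono inter_subset_left).piecewise_Iio (hconst.piecewise_Iio (hz.mono ?_)), fun s hs => ?_⟩
  · exact inter_subset_left.trans inter_subset_left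
  · rw [piecewise_Iio_of_ge _ _ hs.1, piecewise_Iio_of_lt _ _ hs.2]

end IsCadlagSelection

end Cadlag

section RealCadlag

variable {X : Type*} [TopologicalSpace X] {Γ : ℝ → Set X} {a b : ℝ}

lemma IsCadlagSelection.exists_apply_eq {S : Set ℝ} {z : ℝ → X} (hz : IsCadlagSelection S Γ z)
    {t : ℝ} {x : X} (hx : ∀ᶠ s in 𝓝[S ∩ Ici t] t, x ∈ Γ s) :
    ∃ w, IsCadlagSelection S Γ w ∧ w t = x := by
  rw [inter_comm, nhdsWithin_inter', eventually_inf_principal] at hx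
  obtain ⟨b, htb, hb⟩ := mem_nhdsGE_iff_exists_Ico_subset.1 hx
  obtain ⟨w, hw, hwx⟩ := hz.exists_eqOn_Ico fun s hs => hb hs.2 hs.1
  exact ⟨w, hw, hwx ⟨le_rfl, htb⟩⟩

lemma IsCadlagSelection.exists_tendsto_nhdsLT {S : Set ℝ} {z : ℝ → X}
    (hz : IsCadlagSelection S Γ z) {t : ℝ} {x : X} (hx : ∀ᶠ s in 𝓝[<] t, x ∈ Γ s) :
    ∃ w, IsCadlagSelection S Γ w ∧ Tendsto w (𝓝[<] t) (𝓝 x) := by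
  obtain ⟨a, hat, ha⟩ := mem_nhdsLT_iff_exists_Ico_subset.1 hx
  obtain ⟨w, hw, hwx⟩ := hz.exists_eqOn_Ico fun s hs => ha hs.2
  refine ⟨w, hw, tendsto_const_nhds.congr' (EventuallyEq.symm ?_)⟩
  exact hwx.eventuallyEq_of_mem (Ico_mem_nhdsLT hat)

lemma exists_isCadlagSelection_Icc_of_locally (hab : a ≤ b)
    (h : ∀ t ∈ Icc a b, ∃ z : ℝ → X, IsCadlag z ∧ ∀ᶠ s in 𝓝[Icc a b] t, z s ∈ Γ s) :
    ∃ z, IsCadlagSelection (Icc a b) Γ z := by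
  choose z hz hzmem using fun t : Icc a b => h t t.2
  choose U hU htU hUz using fun t => mem_nhdsWithin.1 (hzmem t)
  obtain ⟨τ, hτ₀, hτ, ⟨m, hm⟩, hτU⟩ := exists_monotone_Icc_subset_open_cover_Icc hab
    (fun t => (hU t).preimage continuous_subtype_val) fun t _ => mem_iUnion.2 ⟨t, htU t⟩
  have hpiece : ∀ n, ∃ w, IsCadlagSelection (Icc (τ n : ℝ) (τ (n + 1))) Γ w := by
    intro n
    obtain ⟨t, ht⟩ := hτU n
    refine ⟨z t, hz t, fun s hs => ?_⟩
    have hsab : s ∈ Icc a b := ⟨(τ n).2.1.trans hs.1, hs.2.trans (τ (n + 1)).2.2⟩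
    exact hUz t ⟨ht (show (⟨s, hsab⟩ : Icc a b) ∈ Icc (τ n) (τ (n + 1)) from hs), hsab⟩
  have hglue : ∀ n, ∃ w, IsCadlagSelection (Icc a (τ n)) Γ w := by
    intro n
    induction n with
    | zero =>
      obtain ⟨w, hw⟩ := hpiece 0
      exact ⟨w, hw.mono (Icc_subset_Icc (by rw [hτ₀]) (hτ zero_le_one))⟩
    | succ n ih =>
      obtain ⟨v, hv⟩ := ih
      obtain ⟨w, hw⟩ := hpiece n
      exact ⟨_, (hv.mono fun s hs => ⟨hs.1.1, le_of_lt hs.2⟩).piecewise_Iio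
        (hw.mono fun s hs => ⟨hs.2, hs.1.2⟩)⟩
  simpa only [hm m le_rfl] using hglue m

lemma exists_isCadlagSelection_Icc (hab : a ≤ b)
    (hright : ∀ t ∈ Icc a b, ∃ x, ∀ᶠ s in 𝓝[Icc a b ∩ Ici t] t, x ∈ Γ s)
    (hleft : ∀ t ∈ Ioc a b, ∃ x, ∀ᶠ s in 𝓝[<] t, x ∈ Γ s) :
    ∃ z, IsCadlagSelection (Icc a b) Γ z := by
  refine exists_isCadlagSelection_Icc_of_locally hab fun t ht => ?_
  obtain ⟨x, hx⟩ := hright t ht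
  rcases ht.1.eq_or_lt with rfl | hat
  · refine ⟨fun _ => x, isCadlag_const x, ?_⟩
    rwa [inter_eq_left.2 fun s hs => hs.1] at hx
  · obtain ⟨y, hy⟩ := hleft t ⟨hat, ht.2⟩
    refine ⟨_, (isCadlag_const y).piecewise_Iio (isCadlag_const x) t, ?_⟩
    rw [← inter_univ (Icc a b), ← Ici_union_Iio (a := t), inter_union_distrib_left,
      nhdsWithin_union, eventually_sup]
    constructor
    · filter_upwards [hx, self_mem_nhdsWithin] with s hs hmem
      rwa [piecewise_Iio_of_ge _ _ hmem.2]
    · filter_upwards [nhdsWithin_mono t inter_subset_right hy, self_mem_nhdsWithin] with s hs hmem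
      rwa [piecewise_Iio_of_lt _ _ hmem.2]

end RealCadlag

section OneSided

lemma exists_strictMono_tendsto_of_frequently_nhdsLT {ι : Type*} [LinearOrder ι]
    [TopologicalSpace ι] [OrderTopology ι] [FirstCountableTopology ι] {t : ι} {p : ι → Prop}
    (h : ∃ᶠ s in 𝓝[<] t, p s) :
    ∃ u : ℕ → ι, StrictMono u ∧ Tendsto u atTop (𝓝[<] t) ∧ ∀ n, p (u n) := by
  obtain ⟨v, hv, hpv⟩ := exists_seq_forall_of_frequently (h.and_eventually self_mem_nhdsWithin)
  obtain ⟨φ, hincr | hnonincr⟩ := exists_increasing_or_nonincreasing_subseq (· < ·) v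
  · exact ⟨v ∘ φ, hincr, hv.comp φ.strictMono.tendsto_atTop, fun n => (hpv _).1⟩
  · have hlarge : ∀ᶠ n in atTop, v (φ 0) < v (φ n) :=
      ((tendsto_nhdsWithin_iff.1 hv).1.comp φ.strictMono.tendsto_atTop).eventually
        (lt_mem_nhds (hpv (φ 0)).2)
    obtain ⟨n, hlt, hn⟩ := (hlarge.and (eventually_gt_atTop 0)).exists
    exact absurd hlt (hnonincr 0 n hn)

variable {d : ℕ} {T t : ℝ} {Γ : ℝ → Set (Euc d)} {x : Euc d}

lemma leftLiminfSV_eq_innerLimit (ht : 0 < t) (hne : ∀ᶠ s in 𝓝[<] t, (Γ s).Nonempty) :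
    leftLiminfSV Γ t = innerLimit (𝓝[<] t) Γ := by
  refine Subset.antisymm (fun x hx ε hε => ?_) fun x hx s hs => ?_
  · by_contra hfar
    obtain ⟨s, hmono, hst, hs⟩ := exists_strictMono_tendsto_of_frequently_nhdsLT
      ((not_eventually.1 hfar).and_eventually (hne.and (Ioo_mem_nhdsLT ht)))
    have hlim := hx s ⟨hmono, fun n => ⟨(hs n).2.2.1.le, (hs n).2.2.2⟩,
      (tendsto_nhdsWithin_iff.1 hst).1⟩
    obtain ⟨n, hn⟩ := (hlim.eventually (gt_mem_nhds hε)).exists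
    exact (hs n).1 (Metric.mem_thickening_iff.2 ((Metric.infDist_lt_iff (hs n).2.1).1 hn))
  · have hst : Tendsto s atTop (𝓝[<] t) :=
      tendsto_nhdsWithin_iff.2 ⟨hs.2.2, Eventually.of_forall fun n => (hs.2.1 n).2⟩
    refine Metric.tendsto_nhds.2 fun ε hε => ?_
    filter_upwards [hst.eventually (hx ε hε)] with n hn
    obtain ⟨y, hy, hxy⟩ := Metric.mem_thickening_iff.1 hn
    rw [Real.dist_0_eq_abs, abs_of_nonneg Metric.infDist_nonneg]
    exact (Metric.infDist_le_dist_of_mem hy).trans_lt hxy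

lemma vecSV_eq_innerLimit (hne : ∀ s ∈ Icc 0 T, (Γ s).Nonempty) (ht : t ∈ Ioc 0 T) :
    vecSV Γ t = innerLimit (𝓝[<] t) Γ := by
  rw [vecSV, if_neg (not_le.2 ht.1), leftLiminfSV_eq_innerLimit ht.1]
  filter_upwards [Ioo_mem_nhdsLT ht.1] with s hs
  exact hne s ⟨hs.1.le, hs.2.le.trans ht.2⟩

lemma rightIscSV_iff : RightIscSV T Γ ↔
    ∀ t ∈ Icc 0 T, Γ t ⊆ innerLimit (𝓝[Icc 0 T ∩ Ici t] t) Γ := by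
  refine forall₄_congr fun t _ x _ => forall₂_congr fun ε _ => ?_
  simp only [eventually_nhdsWithin_iff, Metric.eventually_nhds_iff, Metric.mem_thickening_iff,
    dist_comm x, Real.dist_eq]
  refine exists_congr fun δ => and_congr_right fun _ => forall_congr' fun s => ?_
  refine ⟨fun h hst hs => h hs.1 hs.2 ?_, fun h hs hts hst => h ?_ ⟨hs, hts⟩⟩
  · linarith [le_abs_self (s - t)]
  · rw [abs_of_nonneg (sub_nonneg.2 hts)]
    linarith

lemma leftIscSV_iff : LeftIscSV T Γ ↔
    ∀ t ∈ Icc 0 T, Γ t ⊆ innerLimit (𝓝[Icc 0 T ∩ Iic t] t) Γ := by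
  refine forall₄_congr fun t _ x _ => forall₂_congr fun ε _ => ?_
  simp only [eventually_nhdsWithin_iff, Metric.eventually_nhds_iff, Metric.mem_thickening_iff,
    dist_comm x, Real.dist_eq]
  refine exists_congr fun δ => and_congr_right fun _ => forall_congr' fun s => ?_
  refine ⟨fun h hst hs => h hs.1 hs.2 ?_, fun h hs hst hts => h ?_ ⟨hs, hst⟩⟩
  · linarith [neg_abs_le (s - t)]
  · rw [abs_of_nonpos (sub_nonpos.2 hst)]
    linarith

lemma IsCadlagOn.continuousWithinAt {z : ℝ → Euc d} (hz : IsCadlagOn T z) (ht : t ∈ Icc 0 T) :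
    ContinuousWithinAt z (Icc 0 T ∩ Ici t) t := by
  rcases ht.2.eq_or_lt with rfl | htT
  · exact continuousWithinAt_singleton.mono fun s hs => le_antisymm hs.1.2 hs.2
  · exact (continuousWithinAt_Ioi_iff_Ici.1 (hz.1 t ⟨ht.1, htT⟩)).mono inter_subset_right

/-- The set `D(Γ)` of càdlàg selections of `Γ` on `[0,T]`. -/
def cadlagSelections (T : ℝ) (Γ : ℝ → Set (Euc d)) : Set (ℝ → Euc d) :=
  {z | IsCadlagOn T z ∧ ∀ r ∈ Icc 0 T, z r ∈ Γ r}

lemma IsCadlagSelection.mem_cadlagSelections {z : ℝ → Euc d}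
    (hz : IsCadlagSelection (Icc 0 T) Γ z) : z ∈ cadlagSelections T Γ :=
  ⟨⟨fun t _ => (hz.1 t).1, fun t _ => (hz.1 t).2⟩, hz.2⟩

lemma lmod_eq_of_tendsto {z : ℝ → Euc d} (ht : 0 < t) (hz : Tendsto z (𝓝[<] t) (𝓝 x)) :
    lmod z t = x := by
  rw [lmod, if_neg (not_le.2 ht)]
  exact leftLim_eq_of_tendsto hz

lemma rightIscSV_of_subset_closure_eval
    (h : ∀ t ∈ Icc 0 T, Γ t ⊆ closure ((fun z => z t) '' cadlagSelections T Γ)) :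
    RightIscSV T Γ := by
  refine rightIscSV_iff.2 fun t ht => (h t ht).trans (closure_minimal ?_ isClosed_innerLimit)
  rintro _ ⟨z, ⟨hz, hzΓ⟩, rfl⟩
  refine mem_innerLimit_of_tendsto (hz.continuousWithinAt ht) ?_
  filter_upwards [self_mem_nhdsWithin] with s hs using hzΓ s hs.1

lemma lmod_mem_vecSV {z : ℝ → Euc d} (hz : z ∈ cadlagSelections T Γ) (ht : t ∈ Ioc 0 T) :
    lmod z t ∈ vecSV Γ t := by
  have hne : ∀ s ∈ Icc 0 T, (Γ s).Nonempty := fun s hs => ⟨z s, hz.2 s hs⟩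
  obtain ⟨y, hy⟩ := hz.1.2 t ht
  rw [vecSV_eq_innerLimit hne ht, lmod_eq_of_tendsto ht.1 hy]
  refine mem_innerLimit_of_tendsto hy ?_
  filter_upwards [Ioo_mem_nhdsLT ht.1] with s hs using hz.2 s ⟨hs.1.le, hs.2.le.trans ht.2⟩

lemma eventually_mem_of_mem_interior (hval : ∀ t ∈ Icc 0 T, IsClosed (Γ t) ∧ Convex ℝ (Γ t))
    (hisc : RightIscSV T Γ) (ht : t ∈ Icc 0 T) (hx : x ∈ interior (Γ t)) :
    ∀ᶠ s in 𝓝[Icc 0 T ∩ Ici t] t, x ∈ Γ s := by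
  refine eventually_mem_of_mem_interior_innerLimit ?_
    (interior_mono (rightIscSV_iff.1 hisc t ht) hx)
  filter_upwards [self_mem_nhdsWithin] with s hs using hval s hs.1

lemma eventually_mem_of_mem_interior_vecSV
    (hval : ∀ t ∈ Icc 0 T, IsClosed (Γ t) ∧ Convex ℝ (Γ t)) (hne : ∀ t ∈ Icc 0 T, (Γ t).Nonempty)
    (ht : t ∈ Ioc 0 T) (hx : x ∈ interior (vecSV Γ t)) : ∀ᶠ s in 𝓝[<] t, x ∈ Γ s := by
  rw [vecSV_eq_innerLimit hne ht] at hx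
  refine eventually_mem_of_mem_interior_innerLimit ?_ hx
  filter_upwards [Ioo_mem_nhdsLT ht.1] with s hs using hval s ⟨hs.1.le, hs.2.le.trans ht.2⟩

lemma isClosed_vecSV (hne : ∀ t ∈ Icc 0 T, (Γ t).Nonempty) (ht : t ∈ Ioc 0 T) :
    IsClosed (vecSV Γ t) := by
  rw [vecSV_eq_innerLimit hne ht]
  exact isClosed_innerLimit

lemma convex_vecSV (hconv : ∀ t ∈ Icc 0 T, Convex ℝ (Γ t)) (hne : ∀ t ∈ Icc 0 T, (Γ t).Nonempty)
    (ht : t ∈ Ioc 0 T) : Convex ℝ (vecSV Γ t) := by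
  rw [vecSV_eq_innerLimit hne ht]
  refine convex_innerLimit ?_
  filter_upwards [Ioo_mem_nhdsLT ht.1] with s hs using hconv s ⟨hs.1.le, hs.2.le.trans ht.2⟩

lemma leftIscSV_vecSV (hval : ∀ t ∈ Icc 0 T, IsClosed (Γ t) ∧ Convex ℝ (Γ t))
    (hne : ∀ t ∈ Icc 0 T, (Γ t).Nonempty)
    (hsolidvec : ∀ t ∈ Ioc 0 T, (interior (vecSV Γ t)).Nonempty) : LeftIscSV T (vecSV Γ) := by
  refine leftIscSV_iff.2 fun t ht => ?_
  rcases ht.1.eq_or_lt with rfl | h0t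
  · intro x hx
    refine mem_innerLimit_of_eventually_mem ?_
    filter_upwards [self_mem_nhdsWithin] with s hs
    rwa [le_antisymm hs.2 hs.1.1]
  have ht' : t ∈ Ioc 0 T := ⟨h0t, ht.2⟩
  rw [eq_closure_of_interior_subset (isClosed_vecSV hne ht')
    (convex_vecSV (fun s hs => (hval s hs).2) hne ht') (hsolidvec t ht') Subset.rfl interior_subset]
  refine closure_minimal (fun x hx => mem_innerLimit_of_eventually_mem ?_) isClosed_innerLimit
  have hbefore : ∀ᶠ s in 𝓝[<] t, x ∈ vecSV Γ s := by
    have hmem := eventually_mem_of_mem_interior_vecSV hval hne ht' hx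
    filter_upwards [eventually_eventually_nhdsWithin.2 hmem, Ioo_mem_nhdsLT h0t] with s hs hst
    rw [vecSV_eq_innerLimit hne ⟨hst.1, hst.2.le.trans ht.2⟩]
    rw [isOpen_Iio.nhdsWithin_eq hst.2] at hs
    exact mem_innerLimit_of_eventually_mem (hs.filter_mono nhdsWithin_le_nhds)
  refine Eventually.filter_mono (nhdsWithin_mono t inter_subset_right) ?_
  rw [← Iio_insert, nhdsWithin_insert, eventually_sup]
  exact ⟨eventually_pure.2 (interior_subset hx), hbefore⟩

lemma RightIscSV.exists_isCadlagSelection (hisc : RightIscSV T Γ)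
    (hval : ∀ t ∈ Icc 0 T, IsClosed (Γ t) ∧ Convex ℝ (Γ t))
    (hsolid : ∀ t ∈ Icc 0 T, (interior (Γ t)).Nonempty)
    (hsolidvec : ∀ t ∈ Ioc 0 T, (interior (vecSV Γ t)).Nonempty) (hT : 0 ≤ T) :
    ∃ z, IsCadlagSelection (Icc 0 T) Γ z := by
  refine exists_isCadlagSelection_Icc hT (fun t ht => ?_) fun t ht => ?_
  · exact (hsolid t ht).imp fun x => eventually_mem_of_mem_interior hval hisc ht
  · exact (hsolidvec t ht).imp fun x => eventually_mem_of_mem_interior_vecSV hval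
      (fun s hs => (hsolid s hs).mono interior_subset) ht

lemma RightIscSV.eq_closure_eval (hisc : RightIscSV T Γ)
    (hval : ∀ t ∈ Icc 0 T, IsClosed (Γ t) ∧ Convex ℝ (Γ t))
    (hsolid : ∀ t ∈ Icc 0 T, (interior (Γ t)).Nonempty)
    (hsolidvec : ∀ t ∈ Ioc 0 T, (interior (vecSV Γ t)).Nonempty) (ht : t ∈ Icc 0 T) :
    Γ t = closure ((fun z => z t) '' cadlagSelections T Γ) := by
  obtain ⟨z, hz⟩ := hisc.exists_isCadlagSelection hval hsolid hsolidvec (ht.1.trans ht.2)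
  refine eq_closure_of_interior_subset (hval t ht).1 (hval t ht).2 (hsolid t ht) (fun x hx => ?_) ?_
  · obtain ⟨w, hw, hwt⟩ := hz.exists_apply_eq (eventually_mem_of_mem_interior hval hisc ht hx)
    exact ⟨w, hw.mem_cadlagSelections, hwt⟩
  · exact image_subset_iff.2 fun w hw => hw.2 t ht

lemma RightIscSV.vecSV_eq_closure_lmod (hisc : RightIscSV T Γ)
    (hval : ∀ t ∈ Icc 0 T, IsClosed (Γ t) ∧ Convex ℝ (Γ t))
    (hsolid : ∀ t ∈ Icc 0 T, (interior (Γ t)).Nonempty)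
    (hsolidvec : ∀ t ∈ Ioc 0 T, (interior (vecSV Γ t)).Nonempty) (ht : t ∈ Ioc 0 T) :
    vecSV Γ t = closure ((fun z => lmod z t) '' cadlagSelections T Γ) := by
  have hne : ∀ s ∈ Icc 0 T, (Γ s).Nonempty := fun s hs => (hsolid s hs).mono interior_subset
  obtain ⟨z, hz⟩ := hisc.exists_isCadlagSelection hval hsolid hsolidvec (ht.1.le.trans ht.2)
  refine eq_closure_of_interior_subset (isClosed_vecSV hne ht)
    (convex_vecSV (fun s hs => (hval s hs).2) hne ht) (hsolidvec t ht) (fun x hx => ?_) ?_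
  · obtain ⟨w, hw, hwt⟩ :=
      hz.exists_tendsto_nhdsLT (eventually_mem_of_mem_interior_vecSV hval hne ht hx)
    exact ⟨w, hw.mem_cadlagSelections, lmod_eq_of_tendsto ht.1 hwt⟩
  · exact image_subset_iff.2 fun w hw => lmod_mem_vecSV hw ht

end OneSided

theorem statement10_general {d : ℕ} {T : ℝ} {Γ : ℝ → Set (Euc d)}
    (hval : ∀ t ∈ Icc 0 T, IsClosed (Γ t) ∧ Convex ℝ (Γ t))
    (hsolid : ∀ t ∈ Icc 0 T, (interior (Γ t)).Nonempty)
    (hsolidvec : ∀ t ∈ Ioc 0 T, (interior (vecSV Γ t)).Nonempty) :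
    ((∀ t ∈ Icc 0 T, Γ t = closure ((fun z => z t) '' cadlagSelections T Γ)) ↔
      RightIscSV T Γ) ∧
    LeftIscSV T (vecSV Γ) ∧
    (RightIscSV T Γ → ∀ t ∈ Ioc 0 T,
      vecSV Γ t = closure ((fun z => lmod z t) '' cadlagSelections T Γ)) := by
  refine ⟨⟨fun h => ?_, fun hisc t => ?_⟩, ?_, fun hisc t => ?_⟩
  · exact rightIscSV_of_subset_closure_eval fun t ht => (h t ht).subset
  · exact hisc.eq_closure_eval hval hsolid hsolidvec
  · exact leftIscSV_vecSV hval (fun t ht => (hsolid t ht).mono interior_subset) hsolidvec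
  · exact hisc.vecSV_eq_closure_lmod hval hsolid hsolidvec

/-- **Càdlàg selections of solid convex-valued mappings** (Theorem 7.2): for a closed
convex-valued mapping `Γ` with `int Γ_t ≠ ∅` and `int ⃗Γ_t ≠ ∅`, one has
`Γ_t = cl{y_t | y ∈ D(Γ)}` for all `t` iff `Γ` is right-inner semicontinuous; in that
case `⃗Γ` is left-inner semicontinuous and `⃗Γ_t = cl{y_{t-} | y ∈ D(Γ)}`. -/
theorem statement10 {d : ℕ} (T : ℝ) (hT : 0 < T) (Γ : ℝ → Set (Euc d))
    (hval : ∀ t ∈ Set.Icc (0:ℝ) T, IsClosed (Γ t) ∧ Convex ℝ (Γ t))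
    (hsolid : ∀ t ∈ Set.Icc (0:ℝ) T, (interior (Γ t)).Nonempty)
    (hsolidvec : ∀ t ∈ Set.Ioc (0:ℝ) T, (interior (vecSV Γ t)).Nonempty) :
    ((∀ t ∈ Set.Icc (0:ℝ) T, Γ t = closure {v | ∃ z : ℝ → Euc d,
        (IsCadlagOn T z ∧ ∀ r ∈ Set.Icc (0:ℝ) T, z r ∈ Γ r) ∧ z t = v}) ↔
      RightIscSV T Γ) ∧
    (RightIscSV T Γ →
      LeftIscSV T (vecSV Γ) ∧
      ∀ t ∈ Set.Ioc (0:ℝ) T, vecSV Γ t = closure {v | ∃ z : ℝ → Euc d,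
        (IsCadlagOn T z ∧ ∀ r ∈ Set.Icc (0:ℝ) T, z r ∈ Γ r) ∧ lmod z t = v}) := by
  obtain ⟨hiff, hleft, hlmod⟩ := statement10_general hval hsolid hsolidvec
  exact ⟨hiff, fun hisc => ⟨hleft, hlmod hisc⟩⟩
end

section
/- Let (Ω,F,P) be a complete probability space, T > 0 finite, and A ∈ F ⊗ B([0,T]). Then the set ⃗cl A := {(ω,t) ∈ Ω × (0,T] | for every s < t, (s,t) ∩ A_ω ≠ ∅}, where A_ω := {t | (ω,t) ∈ A}, belongs to F ⊗ B([0,T]). -/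
open MeasureTheory Filter Set Topology
open scoped ENNReal Classical

/-! A point `t` is a limit from the left of the section `A_ω` iff for every `s < t` in a countable
dense set there is `r ≤ t` in that set such that `A_ω` meets `(s, r)`. For fixed `s` and `r` the
set of such `ω` is the projection to `Ω` of a measurable subset of the product.

Such projections are measurable when `Ω` is complete: since `A` involves only countably many
measurable subsets of `Ω`, it is pulled back from the standard Borel space `(ℕ → Bool) × X`, where
the projection is analytic, and analytic sets are null-measurable. The last fact is Choquet's
capacity argument: if `g : (ℕ → ℕ) → Y` has range of measure greater than `a`, then bounding the
coordinates one after the other keeps the measure of the image above `a`, and bounding all of them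
leaves a compact set. -/

section AnalyticSets

theorem exists_pi_Iio_Iic_subset_of_isOpen {n : ℕ → ℕ} {U : Set (ℕ → ℕ)} (hU : IsOpen U)
    (hnU : (univ.pi fun i => Iic (n i)) ⊆ U) : ∃ k, ((Iio k).pi fun i => Iic (n i)) ⊆ U := by
  by_contra! h
  simp only [not_subset] at h
  choose x hx hxU using h
  have hK : IsCompact (univ.pi fun i => Iic (n i)) :=
    isCompact_univ_pi fun i => (finite_Iic (n i)).isCompact
  obtain ⟨z, hz, φ, hφ, hlim⟩ := hK.tendsto_subseq (x := fun k i => min (x k i) (n i))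
    fun _ _ _ => mem_Iic.2 (min_le_right _ _)
  -- The `i`-th coordinate of `x k` is unaffected by the truncation as soon as `k > i`.
  have hxz : Tendsto (x ∘ φ) atTop (𝓝 z) := by
    rw [tendsto_pi_nhds] at hlim ⊢
    intro i
    refine (hlim i).congr' ?_
    filter_upwards [eventually_gt_atTop i] with k hk
    exact min_eq_left (hx (φ k) i (hk.trans_le (hφ.id_le k)))
  obtain ⟨k, hk⟩ := (hxz.eventually (hU.mem_nhds (hnU hz))).exists
  exact hxU (φ k) hk

theorem iInter_closure_image_pi_Iio_Iic_subset {X : Type*} [TopologicalSpace X] [T2Space X]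
    {g : (ℕ → ℕ) → X} (hg : Continuous g) (n : ℕ → ℕ) :
    ⋂ k, closure (g '' (Iio k).pi fun i => Iic (n i)) ⊆ g '' univ.pi fun i => Iic (n i) := by
  intro y hy
  by_contra hyK
  have hK : IsCompact (g '' univ.pi fun i => Iic (n i)) :=
    (isCompact_univ_pi fun i => (finite_Iic (n i)).isCompact).image hg
  obtain ⟨V, W, hV, hW, hKV, hyW, hVW⟩ := hK.separation_of_notMem hyK
  obtain ⟨k, hk⟩ := exists_pi_Iio_Iic_subset_of_isOpen (hV.preimage hg) (image_subset_iff.1 hKV)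
  obtain ⟨v, hvW, hv⟩ := mem_closure_iff.1 (mem_iInter.1 hy k) W hW hyW
  exact hVW.notMem_of_mem_left (image_subset_iff.2 hk hv) hvW

variable {X : Type*} [MeasurableSpace X]

theorem exists_lt_measure_image_inter_preimage_Iic {α : Type*} (μ : Measure X) (g : α → X)
    (φ : α → ℕ) {C : Set α} {a : ℝ≥0∞} (ha : a < μ (g '' C)) :
    ∃ m, a < μ (g '' (C ∩ φ ⁻¹' Iic m)) := by
  have image_eq_iUnion : g '' C = ⋃ m, g '' (C ∩ φ ⁻¹' Iic m) := by
    have : ⋃ m, φ ⁻¹' Iic m = univ :=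
      iUnion_eq_univ_iff.2 fun x => ⟨φ x, mem_preimage.2 self_mem_Iic⟩
    rw [← image_iUnion, ← inter_iUnion, this, inter_univ]
  have mono : Monotone fun m => g '' (C ∩ φ ⁻¹' Iic m) := fun _ _ hm =>
    image_mono (inter_subset_inter_right C (preimage_mono (Iic_subset_Iic.2 hm)))
  rw [image_eq_iUnion, mono.measure_iUnion] at ha
  exact lt_iSup_iff.1 ha

theorem exists_forall_lt_measure_image_pi_Iic (μ : Measure X) (g : (ℕ → ℕ) → X) {a : ℝ≥0∞}
    (ha : a < μ (range g)) :
    ∃ n : ℕ → ℕ, ∀ k, a < μ (g '' (Iio k).pi fun i => Iic (n i)) := by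
  choose! N hN using fun (k : ℕ) (C : Set (ℕ → ℕ)) (hC : a < μ (g '' C)) =>
    exists_lt_measure_image_inter_preimage_Iic μ g (· k) hC
  let D : ℕ → Set (ℕ → ℕ) := fun k => k.rec univ fun i C => C ∩ (· i) ⁻¹' Iic (N i C)
  have lt_measure_image_D : ∀ k, a < μ (g '' D k) := by
    intro k
    induction k with
    | zero => rwa [← image_univ] at ha
    | succ k ih => exact hN k _ ih
  have D_subset : ∀ k, D k ⊆ (Iio k).pi fun i => Iic (N i (D i)) := by
    intro k
    induction k with
    | zero => simp
    | succ k ih =>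
      intro x hx i hi
      rcases Nat.lt_succ_iff_lt_or_eq.1 hi with hik | rfl
      · exact ih hx.1 i hik
      · exact hx.2
  exact ⟨fun i => N i (D i), fun k =>
    (lt_measure_image_D k).trans_le (measure_mono (image_mono (D_subset k)))⟩

variable [TopologicalSpace X] [T2Space X] [OpensMeasurableSpace X]

theorem exists_isCompact_subset_range_le_measure (μ : Measure X) [IsFiniteMeasure μ]
    {g : (ℕ → ℕ) → X} (hg : Continuous g) {a : ℝ≥0∞} (ha : a < μ (range g)) :
    ∃ K ⊆ range g, IsCompact K ∧ a ≤ μ K := by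
  obtain ⟨n, hn⟩ := exists_forall_lt_measure_image_pi_Iic μ g ha
  let F : ℕ → Set X := fun k => closure (g '' (Iio k).pi fun i => Iic (n i))
  have hF : Antitone F := fun _ _ hkl =>
    closure_mono (image_mono (pi_mono' (fun _ _ => Subset.rfl) (Iio_subset_Iio hkl)))
  refine ⟨g '' univ.pi fun i => Iic (n i), image_subset_range _ _,
    (isCompact_univ_pi fun i => (finite_Iic (n i)).isCompact).image hg, ?_⟩
  calc a ≤ ⨅ k, μ (F k) := le_iInf fun k => (hn k).le.trans (measure_mono subset_closure)
    _ = μ (⋂ k, F k) := (hF.measure_iInter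
        (fun _ => isClosed_closure.measurableSet.nullMeasurableSet) ⟨0, measure_ne_top _ _⟩).symm
    _ ≤ _ := measure_mono (iInter_closure_image_pi_Iio_Iic_subset hg n)

theorem nullMeasurableSet_range_of_continuous (μ : Measure X) [IsFiniteMeasure μ]
    {g : (ℕ → ℕ) → X} (hg : Continuous g) : NullMeasurableSet (range g) μ := by
  by_cases h0 : μ (range g) = 0
  · exact NullMeasurableSet.of_null h0
  obtain ⟨u, -, hu, hlim⟩ := exists_seq_strictMono_tendsto' (pos_iff_ne_zero.2 h0)
  choose K hKg hK huK using fun k => exists_isCompact_subset_range_le_measure μ hg (hu k).2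
  have hmeas : NullMeasurableSet (⋃ k, K k) μ :=
    (MeasurableSet.iUnion fun k => (hK k).measurableSet).nullMeasurableSet
  have hle : μ (range g) ≤ μ (⋃ k, K k) :=
    le_of_tendsto' hlim fun k => (huK k).trans (measure_mono (subset_iUnion K k))
  exact hmeas.congr
    (ae_eq_of_subset_of_measure_ge (iUnion_subset hKg) hle hmeas (measure_ne_top _ _))

theorem nullMeasurableSet_of_analyticSet (μ : Measure X) [SFinite μ] {S : Set X}
    (hS : AnalyticSet S) : NullMeasurableSet S μ := by
  rw [AnalyticSet] at hS
  rcases hS with rfl | ⟨g, hg, rfl⟩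
  · exact nullMeasurableSet_empty
  · exact (nullMeasurableSet_range_of_continuous μ.toFinite hg).mono_ac
      (absolutelyContinuous_toFinite μ)

end AnalyticSets

section Projection

variable {Ω X : Type*} [MeasurableSpace Ω] [MeasurableSpace X]

theorem exists_measurable_eq_preimage_prodMap_id {A : Set (Ω × X)} (hA : MeasurableSet A) :
    ∃ f : Ω → ℕ → Bool, Measurable f ∧
      ∃ B : Set ((ℕ → Bool) × X), MeasurableSet B ∧ A = Prod.map f id ⁻¹' B := by
  rw [← generateFrom_prod] at hA
  induction A, hA using MeasurableSpace.generateFrom_induction with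
  | hC R hR _ =>
    obtain ⟨s, hs, t, ht, rfl⟩ := hR
    refine ⟨fun ω _ => decide (ω ∈ s), ?_, ((fun b => b 0) ⁻¹' {true}) ×ˢ t, ?_, ?_⟩
    · exact measurable_pi_lambda _ fun _ => measurable_to_bool (by simpa [preimage] using hs)
    · exact (measurable_pi_apply 0 (measurableSet_singleton true)).prod ht
    · ext p
      simp
  | empty => exact ⟨fun _ _ => true, measurable_const, ∅, MeasurableSet.empty, rfl⟩
  | compl _ _ ih =>
    obtain ⟨f, hf, B, hB, rfl⟩ := ih
    exact ⟨f, hf, Bᶜ, hB.compl, rfl⟩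
  | iUnion s _ ih =>
    choose f hf B hB hs using ih
    let row : ℕ → (ℕ → Bool) → ℕ → Bool := fun n b j => b (Nat.pair n j)
    have hrow : ∀ n, Measurable (row n) := fun n =>
      measurable_pi_lambda _ fun j => measurable_pi_apply (Nat.pair n j)
    refine ⟨fun ω m => f m.unpair.1 ω m.unpair.2, ?_, ⋃ n, Prod.map (row n) id ⁻¹' B n, ?_, ?_⟩
    · exact measurable_pi_lambda _ fun m => (measurable_pi_apply _).comp (hf _)
    · exact MeasurableSet.iUnion fun n => (hrow n).prodMap measurable_id (hB n)
    · rw [preimage_iUnion]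
      refine iUnion_congr fun n => ?_
      ext p
      simp [hs n, row, Prod.map]

theorem nullMeasurableSet_image_fst [StandardBorelSpace X] (μ : Measure Ω) [SFinite μ]
    {A : Set (Ω × X)} (hA : MeasurableSet A) : NullMeasurableSet (Prod.fst '' A) μ := by
  obtain ⟨f, hf, B, hB, rfl⟩ := exists_measurable_eq_preimage_prodMap_id hA
  have hproj : NullMeasurableSet (Prod.fst '' B) (μ.map f) :=
    nullMeasurableSet_of_analyticSet _ (hB.analyticSet_image measurable_fst)
  have image_fst_preimage : Prod.fst '' (Prod.map f id ⁻¹' B) = f ⁻¹' (Prod.fst '' B) := by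
    ext ω
    simp
  rw [image_fst_preimage]
  exact hproj.preimage (hf.quasiMeasurePreserving μ)

theorem measurableSet_image_fst_of_isComplete [StandardBorelSpace X] (μ : Measure Ω) [SFinite μ]
    [μ.IsComplete] {A : Set (Ω × X)} (hA : MeasurableSet A) : MeasurableSet (Prod.fst '' A) :=
  (nullMeasurableSet_image_fst μ hA).measurable_of_complete

theorem measurableSet_setOf_inter_nonempty [StandardBorelSpace X] (μ : Measure Ω)
    [SFinite μ] [μ.IsComplete] {S : Set X} (hS : MeasurableSet S) {A : Set (Ω × X)}
    (hA : MeasurableSet A) : MeasurableSet {ω | (S ∩ {t | (ω, t) ∈ A}).Nonempty} := by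
  convert measurableSet_image_fst_of_isComplete μ ((measurable_snd hS).inter hA)
  ext ω
  simp [Set.Nonempty]

end Projection

section LeftLimitPoints

variable {X : Type*} [LinearOrder X]

/-- The limit points from the left of a subset `B` of a linear order: the points `t` such that `B`
meets `(s, t)` for every `s < t`. A least element of the order, if any, satisfies this vacuously. -/
def leftLimitPoints (B : Set X) : Set X :=
  {t | ∀ s < t, (Ioo s t ∩ B).Nonempty}

variable [TopologicalSpace X] [OrderTopology X] [DenselyOrdered X]

theorem mem_leftLimitPoints_iff_of_dense {D : Set X} (hD : Dense D) {B : Set X} {t : X} :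
    t ∈ leftLimitPoints B ↔ ∀ s ∈ D, s < t → ∃ r ∈ D, (Ioo s r ∩ B).Nonempty ∧ r ≤ t := by
  constructor
  · intro h s _ hst
    obtain ⟨u, ⟨hsu, hut⟩, hu⟩ := h s hst
    obtain ⟨r, hr, hur, hrt⟩ := hD.exists_between hut
    exact ⟨r, hr, ⟨u, ⟨hsu, hur⟩, hu⟩, hrt.le⟩
  · intro h s hst
    obtain ⟨q, hq, hsq, hqt⟩ := hD.exists_between hst
    obtain ⟨r, -, hne, hrt⟩ := h q hq hqt
    exact hne.mono (inter_subset_inter_left B (Ioo_subset_Ioo hsq.le hrt))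

theorem statement12_general {Ω : Type*} [MeasurableSpace Ω] [TopologicalSpace.SeparableSpace X]
    [MeasurableSpace X] [OpensMeasurableSpace X] [StandardBorelSpace X] (μ : Measure Ω) [SFinite μ]
    [μ.IsComplete] {A : Set (Ω × X)} (hA : MeasurableSet A) :
    MeasurableSet {p : Ω × X | p.2 ∈ leftLimitPoints {t | (p.1, t) ∈ A}} := by
  obtain ⟨D, hDc, hD⟩ := TopologicalSpace.exists_countable_dense X
  have eq_biInter : {p : Ω × X | p.2 ∈ leftLimitPoints {t | (p.1, t) ∈ A}} =
      ⋂ s ∈ D, (Prod.snd ⁻¹' Iic s ∪ ⋃ r ∈ D,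
        {ω | (Ioo s r ∩ {t | (ω, t) ∈ A}).Nonempty} ×ˢ Ici r) := by
    ext p
    simp only [mem_leftLimitPoints_iff_of_dense hD, ← not_le, ← or_iff_not_imp_left, mem_ofPred_eq,
      mem_iInter, mem_union, mem_preimage, mem_Iic, mem_iUnion, mem_prod, mem_Ici, exists_prop]
  rw [eq_biInter]
  exact MeasurableSet.biInter hDc fun s _ => (measurable_snd measurableSet_Iic).union <|
    MeasurableSet.biUnion hDc fun r _ =>
      (measurableSet_setOf_inter_nonempty μ measurableSet_Ioo hA).prod measurableSet_Ici

end LeftLimitPoints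

/-- **Measurability of pathwise left limit points** (Lemma 7.4): for a complete
probability space `(Ω,F,P)` and `A ∈ F ⊗ B([0,T])`, the set
`⃗cl A = {(ω,t) | t ∈ (0,T] and (s,t) ∩ A_ω ≠ ∅ for every s < t}` is
`F ⊗ B([0,T])`-measurable. -/
theorem statement12 {Ω : Type*} [mΩ : MeasurableSpace Ω] (T : ℝ) (hT : 0 < T)
    (P : Measure Ω) [IsProbabilityMeasure P] (hP : P.IsComplete)
    (A : Set (Ω × ℝ)) (hA : MeasurableSet A) (hAT : A ⊆ Set.univ ×ˢ Set.Icc (0:ℝ) T) :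
    MeasurableSet {p : Ω × ℝ | p.2 ∈ Set.Ioc (0:ℝ) T ∧
      ∀ s < p.2, (Set.Ioo s p.2 ∩ {t : ℝ | (p.1, t) ∈ A}).Nonempty} := by
  exact (measurable_snd measurableSet_Ioc).inter (statement12_general P hA)
end

section
/- Let (Ω,F,(F_t)_{t≥0},P) be a filtered probability space, m ∈ ℕ, and τ : Ω → [0,∞] a random time with {τ < ∞} ⊆ {m < τ ≤ m+1} admitting an announcing sequence: a nondecreasing sequence of stopping times (τ^n) with values in (m,∞], τ^n ≤ τ, τ^n → τ pointwise, τ^n < τ on {τ < ∞}, and {τ = ∞} = ⋃_n {τ^n > m+1}. Then for every decreasing sequence of positive reals ε_n ↓ 0 there exists a nondecreasing sequence of stopping times (σ^n) converging pointwise to τ such that m < σ^n ≤ m+1 on {σ^n < ∞}, σ^n < τ on {τ < ∞}, and |P(σ^n = ∞) − P(τ = ∞)| ≤ ε_n for every n. -/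
open MeasureTheory Filter Set Topology
open scoped ENNReal Classical

/-!
Let `ρⁿ` be the restriction of `τⁿ` to the event `{τⁿ ≤ m + 1}`. This event belongs to the
`σ`-algebra of `τⁿ`, so `ρⁿ` is a stopping time; it equals `τⁿ` where `τ` is finite, since `τⁿ`
exceeds `m + 1` only where `τ` is infinite. The events `{ρⁿ = ∞}` increase to `{τ = ∞}`, so
continuity of the measure from below makes their probabilities converge to `P(τ = ∞)`, and any
prescribed rate `εₙ` is achieved along a subsequence of `(ρⁿ)`.
-/

section RestrictTime

variable {Ω T : Type*}

/-- The restriction `σ_B` of a random time `σ` to a set `B`: it is `σ` on `B` and `⊤` off `B`.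
No measurability of `B` is assumed; when `B` belongs to `F_σ`, that is, `B ∩ {σ ≤ t} ∈ F_t` for
all `t`, the restriction is a stopping time. -/
noncomputable def restrictTime [Top T] (σ : Ω → T) (B : Set Ω) : Ω → T :=
  B.piecewise σ fun _ => ⊤

theorem restrictTime_of_mem [Top T] {σ : Ω → T} {B : Set Ω} {ω : Ω} (h : ω ∈ B) :
    restrictTime σ B ω = σ ω :=
  piecewise_eq_of_mem _ _ _ h

theorem restrictTime_of_notMem [Top T] {σ : Ω → T} {B : Set Ω} {ω : Ω} (h : ω ∉ B) :
    restrictTime σ B ω = ⊤ :=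
  piecewise_eq_of_notMem _ _ _ h

theorem mem_of_restrictTime_ne_top [Top T] {σ : Ω → T} {B : Set Ω} {ω : Ω}
    (h : restrictTime σ B ω ≠ ⊤) : ω ∈ B :=
  not_imp_comm.1 restrictTime_of_notMem h

theorem restrictTime_le_iff [PartialOrder T] [OrderTop T] {σ : Ω → T} {B : Set Ω} {ω : Ω} {t : T}
    (ht : t ≠ ⊤) : restrictTime σ B ω ≤ t ↔ ω ∈ B ∧ σ ω ≤ t := by
  by_cases h : ω ∈ B
  · simp [restrictTime_of_mem h, h]
  · simp [restrictTime_of_notMem h, h, ht]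

theorem restrictTime_le_restrictTime [Preorder T] [OrderTop T] {σ ρ : Ω → T} {B C : Set Ω}
    {ω : Ω} (hle : σ ω ≤ ρ ω) (hmem : ω ∈ C → ω ∈ B) :
    restrictTime σ B ω ≤ restrictTime ρ C ω := by
  by_cases h : ω ∈ C
  · rwa [restrictTime_of_mem h, restrictTime_of_mem (hmem h)]
  · exact le_top.trans_eq (restrictTime_of_notMem h).symm

theorem tendsto_restrictTime [Top T] [TopologicalSpace T] {ι : Type*} {l : Filter ι}
    {σ : ι → Ω → T} {B : ι → Set Ω} {ω : Ω} {x : T} (hσ : Tendsto (fun i => σ i ω) l (𝓝 x))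
    (hB : x ≠ ⊤ → ∀ᶠ i in l, ω ∈ B i) :
    Tendsto (fun i => restrictTime (σ i) (B i) ω) l (𝓝 x) := by
  by_cases hx : x = ⊤
  · subst hx
    exact hσ.if' tendsto_const_nhds
  · exact hσ.congr' ((hB hx).mono fun _ h => (restrictTime_of_mem h).symm)

theorem measurableSet_restrictTime_le [PartialOrder T] [OrderTop T] {F : T → MeasurableSpace Ω}
    {σ : Ω → T} {B : Set Ω} (hB : ∀ t, MeasurableSet[F t] (B ∩ {ω | σ ω ≤ t})) (t : T) :
    MeasurableSet[F t] {ω | restrictTime σ B ω ≤ t} := by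
  by_cases ht : t = ⊤
  · simp [ht]
  · simpa only [restrictTime_le_iff ht, ofPred_and, ofPred_mem_eq] using hB t

theorem measurableSet_le_inter_le [LinearOrder T] {F : T → MeasurableSpace Ω} (hF : Monotone F)
    {σ : Ω → T} (hσ : ∀ t, MeasurableSet[F t] {ω | σ ω ≤ t}) (b t : T) :
    MeasurableSet[F t] ({ω | σ ω ≤ b} ∩ {ω | σ ω ≤ t}) := by
  have h : MeasurableSet[F t] {ω | σ ω ≤ min b t} := hF (min_le_right b t) _ (hσ _)
  simpa only [le_min_iff, ofPred_and] using h

end RestrictTime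

theorem exists_strictMono_abs_measureReal_sub_iUnion_le {α : Type*} {mα : MeasurableSpace α}
    {μ : Measure α} {s : ℕ → Set α} (hs : Monotone s) (hfin : μ (⋃ n, s n) ≠ ∞)
    {ε : ℕ → ℝ} (hε : ∀ n, 0 < ε n) :
    ∃ k : ℕ → ℕ, StrictMono k ∧ ∀ n, |μ.real (s (k n)) - μ.real (⋃ i, s i)| ≤ ε n := by
  have hlim : Tendsto (fun n => μ.real (s n)) atTop (𝓝 (μ.real (⋃ n, s n))) :=
    (ENNReal.tendsto_toReal hfin).comp (tendsto_measure_iUnion_atTop hs)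
  refine extraction_forall_of_eventually
    (P := fun n j => |μ.real (s j) - μ.real (⋃ i, s i)| ≤ ε n) fun n => ?_
  exact (Metric.tendsto_nhds.1 hlim (ε n) (hε n)).mono fun _ hj => hj.le

theorem statement15_general {Ω T : Type*} [MeasurableSpace Ω] (P : Measure Ω) [IsFiniteMeasure P]
    [LinearOrder T] [OrderTop T] [TopologicalSpace T]
    (F : T → MeasurableSpace Ω) (hFmono : Monotone F) (a b : T) (τ : Ω → T) (τn : ℕ → Ω → T)
    (hτn_st : ∀ n t, MeasurableSet[F t] {ω | τn n ω ≤ t})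
    (hτn_mono : ∀ ω, Monotone fun n => τn n ω)
    (hτn_gt : ∀ n ω, a < τn n ω)
    (hτn_tendsto : ∀ ω, Tendsto (fun n => τn n ω) atTop (𝓝 (τ ω)))
    (hτn_lt : ∀ n ω, τ ω < ⊤ → τn n ω < τ ω)
    (hτn_inf : {ω | τ ω = ⊤} = ⋃ n, {ω | b < τn n ω})
    (ε : ℕ → ℝ) (hεpos : ∀ n, 0 < ε n) :
    ∃ σ : ℕ → Ω → T,
      (∀ n t, MeasurableSet[F t] {ω | σ n ω ≤ t}) ∧
      (∀ ω, Monotone fun n => σ n ω) ∧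
      (∀ ω, Tendsto (fun n => σ n ω) atTop (𝓝 (τ ω))) ∧
      (∀ n ω, σ n ω < ⊤ → a < σ n ω ∧ σ n ω ≤ b) ∧
      (∀ n ω, τ ω < ⊤ → σ n ω < τ ω) ∧
      (∀ n, |P.real {ω | σ n ω = ⊤} - P.real {ω | τ ω = ⊤}| ≤ ε n) := by
  have hτ_top (ω : Ω) : τ ω = ⊤ ↔ ∃ n, b < τn n ω := by
    simpa only [mem_ofPred_eq, mem_iUnion] using Set.ext_iff.1 hτn_inf ω
  have hτn_le (ω : Ω) (h : τ ω ≠ ⊤) (n : ℕ) : τn n ω ≤ b :=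
    not_lt.1 fun hn => h ((hτ_top ω).2 ⟨n, hn⟩)
  let ρ (n : ℕ) : Ω → T := restrictTime (τn n) {ω | τn n ω ≤ b}
  have hρ_mono (ω : Ω) : Monotone fun n => ρ n ω := fun _ _ hij =>
    restrictTime_le_restrictTime (hτn_mono ω hij) (hτn_mono ω hij).trans
  have hρ_eq (n : ℕ) (ω : Ω) (h : τn n ω ≤ b) : ρ n ω = τn n ω := restrictTime_of_mem h
  have hρ_lt (n : ℕ) (ω : Ω) (h : τ ω < ⊤) : ρ n ω < τ ω :=
    (hρ_eq n ω (hτn_le ω h.ne n)).trans_lt (hτn_lt n ω h)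
  have hρ_bounds (n : ℕ) (ω : Ω) (h : ρ n ω < ⊤) : a < ρ n ω ∧ ρ n ω ≤ b := by
    have hle : ω ∈ {ω | τn n ω ≤ b} := mem_of_restrictTime_ne_top h.ne
    exact hρ_eq n ω hle ▸ ⟨hτn_gt n ω, hle⟩
  have hρ_top : ⋃ n, {ω | ρ n ω = ⊤} = {ω | τ ω = ⊤} := by
    ext ω
    simp only [mem_iUnion, mem_ofPred_eq]
    refine ⟨fun ⟨n, hn⟩ => of_not_not fun h => ?_, fun h => ?_⟩
    · exact (hρ_lt n ω (lt_top_iff_ne_top.2 h)).not_ge (hn ▸ le_top)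
    · exact ((hτ_top ω).1 h).imp fun n hn => restrictTime_of_notMem hn.not_ge
  obtain ⟨k, hk, hkε⟩ := exists_strictMono_abs_measureReal_sub_iUnion_le (μ := P)
    (s := fun n => {ω | ρ n ω = ⊤})
    (fun _ _ hij ω h => top_unique (h.ge.trans (hρ_mono ω hij))) (measure_ne_top _ _) hεpos
  refine ⟨fun n => ρ (k n), fun n => ?_, fun ω => (hρ_mono ω).comp hk.monotone, fun ω => ?_,
    fun n => hρ_bounds (k n), fun n => hρ_lt (k n), fun n => hρ_top ▸ hkε n⟩
  · exact measurableSet_restrictTime_le (measurableSet_le_inter_le hFmono (hτn_st (k n)) b)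
  · have hρ_tendsto : Tendsto (fun n => ρ n ω) atTop (𝓝 (τ ω)) :=
      tendsto_restrictTime (hτn_tendsto ω) fun h => .of_forall (hτn_le ω h)
    exact hρ_tendsto.comp hk.tendsto_atTop

/-- **Modified announcing sequences** (Lemma 8.2): for a predictable time `τ` with graph
in `(m,m+1]` and an announcing sequence `(τⁿ)`, and for every decreasing sequence of
positive reals `εₙ ↓ 0`, there is a nondecreasing sequence of stopping times `(σⁿ)`
converging pointwise to `τ`, with `m < σⁿ ≤ m+1` where finite, `σⁿ < τ` on `{τ < ∞}`,
and `|P(σⁿ = ∞) − P(τ = ∞)| ≤ εₙ`. -/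
theorem statement15 {Ω : Type*} [mΩ : MeasurableSpace Ω]
    (P : Measure Ω) [IsProbabilityMeasure P]
    (F : ℝ≥0∞ → MeasurableSpace Ω) (hFmono : Monotone F) (hFle : ∀ t, F t ≤ mΩ)
    (m : ℕ) (τ : Ω → ℝ≥0∞)
    (hτ : ∀ t, MeasurableSet[F t] {ω | τ ω ≤ t})
    (hτm : ∀ ω, τ ω < ⊤ → ((m : ℝ≥0∞) < τ ω ∧ τ ω ≤ (m : ℝ≥0∞) + 1))
    (τn : ℕ → Ω → ℝ≥0∞)
    (hτn_st : ∀ n t, MeasurableSet[F t] {ω | τn n ω ≤ t})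
    (hτn_mono : ∀ ω, Monotone fun n => τn n ω)
    (hτn_gt : ∀ n ω, (m : ℝ≥0∞) < τn n ω)
    (hτn_le : ∀ n ω, τn n ω ≤ τ ω)
    (hτn_tendsto : ∀ ω, Tendsto (fun n => τn n ω) atTop (𝓝 (τ ω)))
    (hτn_lt : ∀ n ω, τ ω < ⊤ → τn n ω < τ ω)
    (hτn_inf : {ω | τ ω = ⊤} = ⋃ n, {ω | (m : ℝ≥0∞) + 1 < τn n ω})
    (ε : ℕ → ℝ) (hεpos : ∀ n, 0 < ε n) (hεanti : Antitone ε)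
    (hε0 : Tendsto ε atTop (𝓝 0)) :
    ∃ σ : ℕ → Ω → ℝ≥0∞,
      (∀ n t, MeasurableSet[F t] {ω | σ n ω ≤ t}) ∧
      (∀ ω, Monotone fun n => σ n ω) ∧
      (∀ ω, Tendsto (fun n => σ n ω) atTop (𝓝 (τ ω))) ∧
      (∀ n ω, σ n ω < ⊤ → (m : ℝ≥0∞) < σ n ω ∧ σ n ω ≤ (m : ℝ≥0∞) + 1) ∧
      (∀ n ω, τ ω < ⊤ → σ n ω < τ ω) ∧
      (∀ n, |(P {ω | σ n ω = ⊤}).toReal - (P {ω | τ ω = ⊤}).toReal| ≤ ε n) := by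
  exact statement15_general P F hFmono m (m + 1) τ τn hτn_st hτn_mono hτn_gt hτn_tendsto hτn_lt
    hτn_inf ε hεpos
end
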